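/- arXiv:1412.2230 — 3 statements merged into one kernel-verified Lean document; each statement's English description precedes it below -/
import Mathlib

section
/- For each fixed k ∈ ℕ there is a constant C = C(k) ≥ 1 such that for all integers N ≥ 2 and all t ∈ [0,1): (1/C) · (t^N/(1−t)) (N + 1/(1−t))^k ≤ M_{∞,k}(t) − M_{N,k}(t) ≤ C · (t^N/(1−t)) (N + 1/(1−t))^k, where M_{N,k}(t) = Σ_{ν=1}^{N−1} ν^k t^ν and M_{∞,k}(t) = Σ_{ν=1}^{∞} ν^k t^ν; equivalently, Σ_{ν=N}^{∞} ν^k t^ν is comparable, uniformly in N and t, to (t^N/(1−t))(N + 1/(1−t))^k. -/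
/-- `M_{N,k}(t) = Σ_{ν=1}^{N−1} ν^k t^ν`. -/
noncomputable def Mfin (N k : ℕ) (t : ℝ) : ℝ :=
  ∑ ν ∈ Finset.Ico 1 N, (ν : ℝ) ^ k * t ^ ν

/-- `M_{∞,k}(t) = Σ_{ν=1}^∞ ν^k t^ν`. -/
noncomputable def Minf (k : ℕ) (t : ℝ) : ℝ :=
  ∑' ν : ℕ, ((ν + 1 : ℕ) : ℝ) ^ k * t ^ (ν + 1)

/-!
Factoring `t ^ N` out of the tail leaves `∑ (N + j) ^ k * t ^ j`, which is `1 / (1 - t)` times the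
`k`-th moment of `N + J` for a geometric variable `J` with mean `t / (1 - t) = 1 / (1 - t) - 1`.
The binomial theorem and `E[J ^ i] ≤ i! / (1 - t) ^ i` bound this moment from above by
`k! * (N + 1 / (1 - t)) ^ k`. Jensen's inequality bounds it from below by `(N + t / (1 - t)) ^ k`,
and the base is at least half of `N + 1 / (1 - t)` because `N ≥ 1`.
-/

theorem pow_le_factorial_mul_choose (j k : ℕ) : j ^ k ≤ k.factorial * (j + k).choose k :=
  calc j ^ k ≤ (j + k + 1 - k) ^ k := Nat.pow_le_pow_left (by lia) k
    _ ≤ (j + k).descFactorial k := Nat.pow_sub_le_descFactorial _ _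
    _ = k.factorial * (j + k).choose k := Nat.descFactorial_eq_factorial_mul_choose _ _

section NormedCommRing

variable {R : Type*} [NormedCommRing R] [HasSummableGeomSeries R] {t : R}

theorem hasSum_add_pow_mul_geometric (x : R) (k : ℕ) (ht : ‖t‖ < 1) :
    HasSum (fun j : ℕ ↦ (x + j) ^ k * t ^ j)
      (∑ i ∈ Finset.range (k + 1),
        x ^ i * k.choose i * ∑' j : ℕ, (j : R) ^ (k - i) * t ^ j) := by
  have h_term (i : ℕ) : HasSum (fun j : ℕ ↦ x ^ i * k.choose i * ((j : R) ^ (k - i) * t ^ j))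
      (x ^ i * k.choose i * ∑' j : ℕ, (j : R) ^ (k - i) * t ^ j) :=
    (summable_pow_mul_geometric_of_norm_lt_one (k - i) ht).hasSum.mul_left _
  refine (hasSum_sum fun i (_ : i ∈ Finset.range (k + 1)) ↦ h_term i).congr_fun fun j ↦ ?_
  rw [add_pow, Finset.sum_mul]
  exact Finset.sum_congr rfl fun i _ ↦ by ring

theorem summable_add_pow_mul_geometric (x : R) (k : ℕ) (ht : ‖t‖ < 1) :
    Summable fun j : ℕ ↦ (x + j) ^ k * t ^ j :=
  (hasSum_add_pow_mul_geometric x k ht).summable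

end NormedCommRing

section Real

variable {t x : ℝ}

theorem tsum_pow_mul_geometric_le (k : ℕ) (ht₀ : 0 ≤ t) (ht₁ : t < 1) :
    ∑' j : ℕ, (j : ℝ) ^ k * t ^ j ≤ k.factorial * (1 / (1 - t) ^ (k + 1)) := by
  have ht : ‖t‖ < 1 := by rwa [Real.norm_of_nonneg ht₀]
  refine hasSum_le (fun j ↦ ?_) (summable_pow_mul_geometric_of_norm_lt_one k ht).hasSum
    ((hasSum_choose_mul_geometric_of_norm_lt_one k ht).mul_left (k.factorial : ℝ))
  rw [← mul_assoc]
  gcongr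
  exact_mod_cast pow_le_factorial_mul_choose j k

theorem tsum_add_pow_mul_geometric_le (k : ℕ) (hx : 0 ≤ x) (ht₀ : 0 ≤ t) (ht₁ : t < 1) :
    ∑' j : ℕ, (x + j) ^ k * t ^ j ≤
      k.factorial * (1 / (1 - t) * (x + 1 / (1 - t)) ^ k) := by
  have ht : ‖t‖ < 1 := by rwa [Real.norm_of_nonneg ht₀]
  have : 0 < 1 - t := sub_pos.2 ht₁
  have h_moment (i : ℕ) : ∑' j : ℕ, (j : ℝ) ^ (k - i) * t ^ j ≤
      k.factorial * (1 / (1 - t) ^ (k - i + 1)) :=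
    (tsum_pow_mul_geometric_le (k - i) ht₀ ht₁).trans <| by
      gcongr
      exact Nat.sub_le k i
  calc ∑' j : ℕ, (x + j) ^ k * t ^ j
      = ∑ i ∈ Finset.range (k + 1),
          x ^ i * k.choose i * ∑' j : ℕ, (j : ℝ) ^ (k - i) * t ^ j :=
        (hasSum_add_pow_mul_geometric x k ht).tsum_eq
    _ ≤ ∑ i ∈ Finset.range (k + 1),
          x ^ i * k.choose i * (k.factorial * (1 / (1 - t) ^ (k - i + 1))) := by
        gcongr with i
        exact h_moment i
    _ = k.factorial * (1 / (1 - t) * (x + 1 / (1 - t)) ^ k) := by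
        rw [add_pow, Finset.mul_sum, Finset.mul_sum]
        exact Finset.sum_congr rfl fun i _ ↦ by rw [← one_div_pow, pow_succ]; ring

/-- Jensen's inequality, obtained by summing the tangent-line bound for `y ↦ y ^ k` at the mean
`x + t / (1 - t)`: the linear terms cancel. -/
theorem le_tsum_add_pow_mul_geometric (k : ℕ) (hx : 0 ≤ x) (ht₀ : 0 ≤ t) (ht₁ : t < 1) :
    1 / (1 - t) * (x + t / (1 - t)) ^ k ≤ ∑' j : ℕ, (x + j) ^ k * t ^ j := by
  have ht : ‖t‖ < 1 := by rwa [Real.norm_of_nonneg ht₀]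
  have : 0 < 1 - t := sub_pos.2 ht₁
  set μ := t / (1 - t) with hμ
  have hμ₀ : 0 ≤ μ := by positivity
  have h_tangent (j : ℕ) :
      (x + μ) ^ k + k * (x + μ) ^ (k - 1) * (j - μ) ≤ (x + j) ^ k :=
    (pow_add_mul_le_add_pow (by positivity) (by linarith [j.cast_nonneg (α := ℝ)]) k).trans_eq
      (by ring)
  have h_centered : HasSum (fun j : ℕ ↦ (j - μ) * t ^ j) 0 := by
    convert! (hasSum_coe_mul_geometric_of_norm_lt_one ht).sub
      ((hasSum_geometric_of_lt_one ht₀ ht₁).mul_left μ) using 1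
    · exact funext fun j ↦ sub_mul _ _ _
    · rw [hμ]
      field_simp
      ring
  have h_sum : HasSum
      (fun j : ℕ ↦ (x + μ) ^ k * t ^ j + k * (x + μ) ^ (k - 1) * ((j - μ) * t ^ j))
      (1 / (1 - t) * (x + μ) ^ k) := by
    convert! ((hasSum_geometric_of_lt_one ht₀ ht₁).mul_left _).add (h_centered.mul_left _) using 1
    ring
  refine hasSum_le (fun j ↦ ?_) h_sum (summable_add_pow_mul_geometric x k ht).hasSum
  rw [← mul_assoc, ← add_mul]
  gcongr
  exact h_tangent j

theorem add_one_div_one_sub_div_two_le (hx : 1 ≤ x) (ht₀ : 0 ≤ t) (ht₁ : t < 1) :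
    (x + 1 / (1 - t)) / 2 ≤ x + t / (1 - t) := by
  have h_pos : 0 < 1 - t := sub_pos.2 ht₁
  have h_mean : t / (1 - t) = 1 / (1 - t) - 1 := by field_simp; ring
  have h_one : 1 ≤ 1 / (1 - t) := (one_le_div h_pos).2 (by linarith)
  linarith

theorem Minf_sub_Mfin_eq_pow_mul_tsum {N : ℕ} (k : ℕ) (hN : 1 ≤ N) (ht : ‖t‖ < 1) :
    Minf k t - Mfin N k t = t ^ N * ∑' j : ℕ, ((N : ℝ) + j) ^ k * t ^ j := by
  have hs : Summable fun n : ℕ ↦ (n : ℝ) ^ k * t ^ n :=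
    summable_pow_mul_geometric_of_norm_lt_one k ht
  have h_range := Finset.sum_range_add_sum_Ico (fun n : ℕ ↦ (n : ℝ) ^ k * t ^ n) hN
  have h_tail : Minf k t - Mfin N k t = ∑' j : ℕ, ((j + N : ℕ) : ℝ) ^ k * t ^ (j + N) := by
    rw [Minf, Mfin]
    linarith [hs.sum_add_tsum_nat_add 1, hs.sum_add_tsum_nat_add N]
  rw [h_tail, ← tsum_mul_left]
  refine tsum_congr fun j ↦ ?_
  push_cast
  ring

end Real

theorem Minf_sub_Mfin_asymp_general (k : ℕ) {N : ℕ} (hN : 1 ≤ N) {t : ℝ} (ht₀ : 0 ≤ t)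
    (ht₁ : t < 1) :
    (1 / 2 ^ k) * ((t ^ N / (1 - t)) * ((N : ℝ) + 1 / (1 - t)) ^ k) ≤ Minf k t - Mfin N k t ∧
      Minf k t - Mfin N k t ≤
        k.factorial * ((t ^ N / (1 - t)) * ((N : ℝ) + 1 / (1 - t)) ^ k) := by
  have : 0 < 1 - t := sub_pos.2 ht₁
  rw [Minf_sub_Mfin_eq_pow_mul_tsum k hN (by rwa [Real.norm_of_nonneg ht₀])]
  constructor
  · calc (1 / 2 ^ k) * ((t ^ N / (1 - t)) * ((N : ℝ) + 1 / (1 - t)) ^ k)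
        = t ^ N * (1 / (1 - t) * ((N + 1 / (1 - t)) / 2) ^ k) := by rw [div_pow]; ring
      _ ≤ t ^ N * (1 / (1 - t) * (N + t / (1 - t)) ^ k) := by
          gcongr
          exact add_one_div_one_sub_div_two_le (Nat.one_le_cast.2 hN) ht₀ ht₁
      _ ≤ t ^ N * ∑' j : ℕ, ((N : ℝ) + j) ^ k * t ^ j := by
          gcongr
          exact le_tsum_add_pow_mul_geometric k N.cast_nonneg ht₀ ht₁
  · calc t ^ N * ∑' j : ℕ, ((N : ℝ) + j) ^ k * t ^ j
        ≤ t ^ N * (k.factorial * (1 / (1 - t) * (N + 1 / (1 - t)) ^ k)) := by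
          gcongr
          exact tsum_add_pow_mul_geometric_le k N.cast_nonneg ht₀ ht₁
      _ = k.factorial * ((t ^ N / (1 - t)) * ((N : ℝ) + 1 / (1 - t)) ^ k) := by ring

/-- For each `k` there is `C = C(k) ≥ 1` such that for all `N ≥ 2` and `t ∈ [0,1)`,
the tail `M_{∞,k}(t) − M_{N,k}(t) = Σ_{ν=N}^∞ ν^k t^ν` is comparable, uniformly in
`N` and `t`, to `(t^N/(1−t)) (N + 1/(1−t))^k`. -/
theorem Minf_sub_Mfin_asymp (k : ℕ) :
    ∃ C ≥ (1:ℝ), ∀ N : ℕ, 2 ≤ N → ∀ t : ℝ, 0 ≤ t → t < 1 →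
      (1 / C) * ((t ^ N / (1 - t)) * ((N : ℝ) + 1 / (1 - t)) ^ k)
          ≤ Minf k t - Mfin N k t ∧
      Minf k t - Mfin N k t
          ≤ C * ((t ^ N / (1 - t)) * ((N : ℝ) + 1 / (1 - t)) ^ k) := by
  refine ⟨max (2 ^ k) k.factorial, le_max_of_le_left (one_le_pow₀ one_le_two),
    fun N hN t ht₀ ht₁ ↦ ?_⟩
  have : 0 < 1 - t := sub_pos.2 ht₁
  obtain ⟨h_lower, h_upper⟩ := Minf_sub_Mfin_asymp_general k (one_le_two.trans hN) ht₀ ht₁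
  exact ⟨le_trans (by gcongr; exact le_max_left _ _) h_lower,
    h_upper.trans (by gcongr; exact le_max_right _ _)⟩
end

section
/- For each fixed k ∈ ℕ there is a constant C = C(k) ≥ 1 such that for all integers N ≥ 2 and all t ∈ [0,1): (1/C) · t · min(1/(1−t), N)^{k+1} ≤ M_{N,k}(t) ≤ C · t · min(1/(1−t), N)^{k+1}, where M_{N,k}(t) = Σ_{ν=1}^{N−1} ν^k t^ν. -/
/-!
Write `m = min (1 / (1 - t)) N`. From above, bounding every term by `N ^ k * t` gives the estimate
by `t * N ^ (k + 1)`, while `(n + 1) ^ k ≤ k! * (n + k).choose k` and the series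
`∑ (n + k).choose k * t ^ n = 1 / (1 - t) ^ (k + 1)` give the one by `k! * t / (1 - t) ^ (k + 1)`.
From below, a block `J ≤ ν < 2 * J` with `J = ⌈m / 4⌉` already suffices: it has `J` terms, and
`t ^ (ν - 1) ≥ 1 / 2` on it by Bernoulli's inequality, because `ν - 1 ≤ 2 * (J - 1)` is at most
half of `1 / (1 - t)`.
-/

section Mfin

variable {N : ℕ} {t : ℝ}

lemma Mfin_nonneg (k : ℕ) (ht₀ : 0 ≤ t) : 0 ≤ Mfin N k t :=
  Finset.sum_nonneg fun _ _ ↦ by positivity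

lemma Mfin_le_mul_pow_succ (k : ℕ) (ht₀ : 0 ≤ t) (ht₁ : t ≤ 1) :
    Mfin N k t ≤ t * (N : ℝ) ^ (k + 1) := by
  have term_le : ∀ ν ∈ Finset.Ico 1 N, (ν : ℝ) ^ k * t ^ ν ≤ (N : ℝ) ^ k * t := by
    intro ν hν
    obtain ⟨one_le_ν, ν_lt_N⟩ := Finset.mem_Ico.mp hν
    have pow_le : t ^ ν ≤ t := pow_le_of_le_one ht₀ ht₁ (by omega)
    gcongr
  calc Mfin N k t ≤ (Finset.Ico 1 N).card • ((N : ℝ) ^ k * t) :=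
        Finset.sum_le_card_nsmul _ _ _ term_le
    _ = ((N - 1 : ℕ) : ℝ) * ((N : ℝ) ^ k * t) := by rw [Nat.card_Ico, nsmul_eq_mul]
    _ ≤ N * ((N : ℝ) ^ k * t) := by gcongr; exact Nat.sub_le N 1
    _ = t * (N : ℝ) ^ (k + 1) := by ring

lemma succ_pow_le_factorial_mul_choose (n k : ℕ) :
    (n + 1) ^ k ≤ k.factorial * (n + k).choose k :=
  (Nat.pow_succ_le_ascFactorial (n + 1) k).trans_eq (Nat.ascFactorial_eq_factorial_mul_choose n k)

lemma Mfin_le_factorial_mul (k : ℕ) (ht₀ : 0 ≤ t) (ht₁ : t < 1) :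
    Mfin N k t ≤ k.factorial * (t * (1 / (1 - t)) ^ (k + 1)) := by
  have norm_lt : ‖t‖ < 1 := by rwa [Real.norm_of_nonneg ht₀]
  have term_le (n : ℕ) : ((1 + n : ℕ) : ℝ) ^ k * t ^ (1 + n) ≤
      k.factorial * t * ((n + k).choose k * t ^ n) := by
    have pow_le : ((1 + n : ℕ) : ℝ) ^ k ≤ k.factorial * (n + k).choose k := by
      rw [add_comm]
      exact_mod_cast succ_pow_le_factorial_mul_choose n k
    calc ((1 + n : ℕ) : ℝ) ^ k * t ^ (1 + n)
        ≤ (k.factorial * (n + k).choose k) * t ^ (1 + n) := by gcongr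
      _ = k.factorial * t * ((n + k).choose k * t ^ n) := by ring
  calc Mfin N k t = ∑ n ∈ Finset.range (N - 1), ((1 + n : ℕ) : ℝ) ^ k * t ^ (1 + n) :=
        Finset.sum_Ico_eq_sum_range _ _ _
    _ ≤ ∑ n ∈ Finset.range (N - 1), k.factorial * t * ((n + k).choose k * t ^ n) :=
        Finset.sum_le_sum fun n _ ↦ term_le n
    _ = k.factorial * t * ∑ n ∈ Finset.range (N - 1), (n + k).choose k * t ^ n :=
        (Finset.mul_sum _ _ _).symm
    _ ≤ k.factorial * t * ∑' n : ℕ, (n + k).choose k * t ^ n := by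
        gcongr
        exact (summable_choose_mul_geometric_of_norm_lt_one k norm_lt).sum_le_tsum _
          fun n _ ↦ by positivity
    _ = k.factorial * (t * (1 / (1 - t)) ^ (k + 1)) := by
        rw [tsum_choose_mul_geometric_of_norm_lt_one k norm_lt, one_div_pow, mul_assoc]

lemma Mfin_le_factorial_mul_min (k : ℕ) (ht₀ : 0 ≤ t) (ht₁ : t < 1) :
    Mfin N k t ≤ k.factorial * (t * min (1 / (1 - t)) (N : ℝ) ^ (k + 1)) := by
  rcases min_choice (1 / (1 - t)) (N : ℝ) with hmin | hmin <;> rw [hmin]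
  · exact Mfin_le_factorial_mul k ht₀ ht₁
  · have one_le_factorial : (1 : ℝ) ≤ k.factorial := by exact_mod_cast k.factorial_pos
    exact (Mfin_le_mul_pow_succ k ht₀ ht₁.le).trans
      (le_mul_of_one_le_left (by positivity) one_le_factorial)

lemma mul_pow_succ_le_two_mul_Mfin (k : ℕ) {J : ℕ} (hJ : 0 < J) (hJN : 2 * J ≤ N)
    (ht₀ : 0 ≤ t) (ht₁ : t ≤ 1) (hJt : 4 * ((J : ℝ) - 1) * (1 - t) ≤ 1) :
    t * (J : ℝ) ^ (k + 1) ≤ 2 * Mfin N k t := by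
  have term_ge : ∀ ν ∈ Finset.Ico J (2 * J), (J : ℝ) ^ k * (t * (1 / 2)) ≤ (ν : ℝ) ^ k * t ^ ν := by
    intro ν hν
    obtain ⟨J_le_ν, ν_lt⟩ := Finset.mem_Ico.mp hν
    obtain ⟨n, rfl⟩ : ∃ n, ν = n + 1 := ⟨ν - 1, by omega⟩
    have n_le : (n : ℝ) ≤ 2 * (J - 1) := by
      have : n + 2 ≤ 2 * J := by omega
      have : (n : ℝ) + 2 ≤ 2 * J := by exact_mod_cast this
      linarith
    have half_le_pow : 1 / 2 ≤ t ^ n := by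
      have bernoulli : 1 + n * (t - 1) ≤ t ^ n := one_add_mul_sub_le_pow (by linarith) n
      have : n * (1 - t) ≤ 2 * (J - 1) * (1 - t) :=
        mul_le_mul_of_nonneg_right n_le (sub_nonneg.mpr ht₁)
      linarith
    rw [pow_succ' t]
    gcongr
  have block_le : J * ((J : ℝ) ^ k * (t * (1 / 2))) ≤ Mfin N k t := by
    calc J * ((J : ℝ) ^ k * (t * (1 / 2)))
        = (Finset.Ico J (2 * J)).card • ((J : ℝ) ^ k * (t * (1 / 2))) := by
          rw [Nat.card_Ico, two_mul, Nat.add_sub_cancel, nsmul_eq_mul]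
      _ ≤ ∑ ν ∈ Finset.Ico J (2 * J), (ν : ℝ) ^ k * t ^ ν :=
          Finset.card_nsmul_le_sum _ _ _ term_ge
      _ ≤ Mfin N k t :=
          Finset.sum_le_sum_of_subset_of_nonneg (Finset.Ico_subset_Ico hJ hJN)
            fun _ _ _ ↦ by positivity
  calc t * (J : ℝ) ^ (k + 1) = 2 * (J * ((J : ℝ) ^ k * (t * (1 / 2)))) := by ring
    _ ≤ 2 * Mfin N k t := by gcongr

lemma mul_min_pow_succ_le_Mfin (k : ℕ) (hN : 2 ≤ N) (ht₀ : 0 ≤ t) (ht₁ : t < 1) :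
    t * min (1 / (1 - t)) (N : ℝ) ^ (k + 1) ≤ 2 * 4 ^ (k + 1) * Mfin N k t := by
  have one_sub_pos : 0 < 1 - t := sub_pos.mpr ht₁
  set m := min (1 / (1 - t)) (N : ℝ)
  have m_pos : 0 < m := lt_min (by positivity) (by positivity)
  have m_le_N : m ≤ N := min_le_right _ _
  have m_mul_le : m * (1 - t) ≤ 1 := (le_div_iff₀ one_sub_pos).mp (min_le_left _ _)
  -- Rounding `m / 4` up rather than down keeps `J` positive when `m` is small.
  set J := ⌈m / 4⌉₊
  have J_pos : 0 < J := Nat.ceil_pos.mpr (div_pos m_pos four_pos)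
  have m_le : m ≤ 4 * J := by linarith [Nat.le_ceil (m / 4)]
  have J_lt : 4 * ((J : ℝ) - 1) < m := by
    linarith [Nat.ceil_lt_add_one (a := m / 4) (by positivity)]
  have two_mul_J_le : 2 * J ≤ N := by
    have : (4 * J : ℝ) < N + 4 := by linarith
    have : 4 * J < N + 4 := by exact_mod_cast this
    omega
  have J_mul_le : 4 * ((J : ℝ) - 1) * (1 - t) ≤ 1 :=
    (mul_le_mul_of_nonneg_right J_lt.le one_sub_pos.le).trans m_mul_le
  calc t * m ^ (k + 1) ≤ t * (4 * J) ^ (k + 1) := by gcongr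
    _ = 4 ^ (k + 1) * (t * (J : ℝ) ^ (k + 1)) := by rw [mul_pow]; ring
    _ ≤ 4 ^ (k + 1) * (2 * Mfin N k t) :=
        mul_le_mul_of_nonneg_left
          (mul_pow_succ_le_two_mul_Mfin k J_pos two_mul_J_le ht₀ ht₁.le J_mul_le) (by positivity)
    _ = 2 * 4 ^ (k + 1) * Mfin N k t := by ring

end Mfin

/-- For each `k` there is `C = C(k) ≥ 1` such that for all `N ≥ 2` and `t ∈ [0,1)`,
`M_{N,k}(t)` is comparable to `t · min(1/(1−t), N)^{k+1}` with constant `C`. -/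
theorem Mfin_asymp (k : ℕ) :
    ∃ C ≥ (1:ℝ), ∀ N : ℕ, 2 ≤ N → ∀ t : ℝ, 0 ≤ t → t < 1 →
      (1 / C) * (t * min (1 / (1 - t)) (N : ℝ) ^ (k + 1)) ≤ Mfin N k t ∧
      Mfin N k t ≤ C * (t * min (1 / (1 - t)) (N : ℝ) ^ (k + 1)) := by
  set C : ℝ := max k.factorial (2 * 4 ^ (k + 1))
  have factorial_le_C : (k.factorial : ℝ) ≤ C := le_max_left _ _
  have one_le_C : 1 ≤ C := le_trans (by exact_mod_cast k.factorial_pos) factorial_le_C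
  refine ⟨C, one_le_C, fun N hN t ht₀ ht₁ ↦ ⟨?lower, ?upper⟩⟩
  case lower =>
    rw [one_div, inv_mul_le_iff₀ (by positivity)]
    exact (mul_min_pow_succ_le_Mfin k hN ht₀ ht₁).trans
      (mul_le_mul_of_nonneg_right (le_max_right _ _) (Mfin_nonneg k ht₀))
  case upper =>
    have min_nonneg : 0 ≤ min (1 / (1 - t)) (N : ℝ) :=
      le_min (one_div_nonneg.mpr (sub_nonneg.mpr ht₁.le)) N.cast_nonneg
    exact (Mfin_le_factorial_mul_min k ht₀ ht₁).trans
      (mul_le_mul_of_nonneg_right factorial_le_C (mul_nonneg ht₀ (pow_nonneg min_nonneg _)))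
end

section
/- There is a universal constant C ≥ 1 such that for all integers N ≥ 2 and all t with 0 < t ≤ 1 − 1/N, with K(t) = K_N(t) = Σ_{ν=0}^{N−1} t^ν: (1/C) K(t)⁴ ≤ (2/t) ( K(t)·((tD)²K)(t) − ((tD)K)(t)² ) ≤ C K(t)⁴, where (tD)K(t) = Σ_{ν=0}^{N−1} ν t^ν and (tD)²K(t) = Σ_{ν=0}^{N−1} ν² t^ν. -/
open Finset

/-!
Write `K` for `∑ ν < N, t ^ ν`. Up to degree `N - 1` the coefficients of `K ^ (r + 1)` are the
binomial coefficients `(s + r).choose r` of `(1 - t)⁻¹ ^ (r + 1)`, and truncating at a fixed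
fraction of `N` costs only a constant factor when `0 ≤ t ≤ 1`. As `(s + 1) ^ 2` is comparable to
`(s + 2).choose 2`, this makes `(tD)²K` comparable to `t * K ^ 3`. The dispersion
`K * (tD)²K - ((tD)K) ^ 2` is clearly at most `K * (tD)²K`; since it does not see translations of
the exponents, splitting off the smallest exponent again and again writes it as
`∑ μ < N, t ^ (2 * μ) * (tD)²K_{N - μ}`, which bounds it below by a multiple of `K * (t * K ^ 3)`.
-/

section CommSemiring

variable {R : Type*} [CommSemiring R]

lemma sum_partialSum_mul_pow (t : R) (b : ℕ → R) (N : ℕ) :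
    ∑ s ∈ range N, (∑ j ∈ range (s + 1), b j) * t ^ s
      = ∑ j ∈ range N, b j * t ^ j * ∑ i ∈ range (N - j), t ^ i := by
  have swap := sum_Ico_Ico_comm 0 N fun j s ↦ b j * t ^ s
  simp only [Nat.Ico_zero_eq_range] at swap
  simp only [sum_mul, ← swap, mul_sum, sum_Ico_eq_sum_range, pow_add, mul_assoc]

lemma sum_range_sq_mul_pow_succ (t : R) (N : ℕ) :
    ∑ ν ∈ range (N + 1), (ν : R) ^ 2 * t ^ ν
      = t * ∑ s ∈ range N, ((s : R) + 1) ^ 2 * t ^ s := by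
  rw [sum_range_succ', mul_sum]
  simp only [Nat.cast_zero, ne_eq, OfNat.ofNat_ne_zero, not_false_eq_true, zero_pow, zero_mul,
    add_zero, Nat.cast_add, Nat.cast_one]
  exact sum_congr rfl fun s _ ↦ by ring

lemma geom_sum_two_mul (t : R) (m : ℕ) :
    ∑ i ∈ range (2 * m), t ^ i = (1 + t) * ∑ i ∈ range m, (t ^ 2) ^ i := by
  induction m with
  | zero => simp
  | succ m ih =>
    rw [Nat.mul_succ, sum_range_succ, sum_range_succ, ih, sum_range_succ]
    ring

end CommSemiring

lemma two_mul_choose_add_two_two (s : ℕ) : 2 * (s + 2).choose 2 = (s + 2) * (s + 1) := by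
  simpa [mul_comm] using (Nat.add_one_mul_choose_eq (s + 1) 1).symm

section Dispersion

variable {R : Type*} [CommRing R]

/-- The expression `K * (tD)²K - ((tD)K) ^ 2` for `K = ∑ ν < N, t ^ ν`. It is `K ^ 2` times the
variance of the probability distribution on `{0, …, N - 1}` with weights proportional to `t ^ ν`. -/
def geomDispersion (t : R) (N : ℕ) : R :=
  (∑ ν ∈ range N, t ^ ν) * (∑ ν ∈ range N, (ν : R) ^ 2 * t ^ ν)
    - (∑ ν ∈ range N, (ν : R) * t ^ ν) ^ 2

lemma geomDispersion_succ (t : R) (N : ℕ) :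
    geomDispersion t (N + 1)
      = t ^ 2 * geomDispersion t N + ∑ ν ∈ range (N + 1), (ν : R) ^ 2 * t ^ ν := by
  have shift₀ : ∑ ν ∈ range (N + 1), t ^ ν = t * ∑ ν ∈ range N, t ^ ν + 1 := by
    rw [sum_range_succ', mul_sum]
    simp only [pow_succ', pow_zero]
  have shift₁ : ∑ ν ∈ range (N + 1), (ν : R) * t ^ ν
      = t * (∑ ν ∈ range N, (ν : R) * t ^ ν + ∑ ν ∈ range N, t ^ ν) := by
    rw [sum_range_succ', ← sum_add_distrib, mul_sum]
    simp only [Nat.cast_zero, zero_mul, add_zero, Nat.cast_add, Nat.cast_one]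
    exact sum_congr rfl fun ν _ ↦ by ring
  have shift₂ : ∑ ν ∈ range (N + 1), (ν : R) ^ 2 * t ^ ν
      = t * (∑ ν ∈ range N, (ν : R) ^ 2 * t ^ ν + 2 * ∑ ν ∈ range N, (ν : R) * t ^ ν
        + ∑ ν ∈ range N, t ^ ν) := by
    rw [sum_range_sq_mul_pow_succ, mul_sum _ _ (2 : R), ← sum_add_distrib, ← sum_add_distrib]
    exact congrArg (t * ·) (sum_congr rfl fun ν _ ↦ by ring)
  rw [geomDispersion, geomDispersion, shift₀, shift₁, shift₂]
  ring

lemma geomDispersion_eq_sum (t : R) (N : ℕ) :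
    geomDispersion t N
      = ∑ μ ∈ range N, (t ^ 2) ^ μ * ∑ ν ∈ range (N - μ), (ν : R) ^ 2 * t ^ ν := by
  induction N with
  | zero => simp [geomDispersion]
  | succ N ih =>
    rw [sum_range_succ', geomDispersion_succ, ih, mul_sum]
    simp only [pow_succ' (t ^ 2), pow_zero, one_mul, mul_assoc, Nat.add_sub_add_right, Nat.sub_zero]

end Dispersion

section Order

variable {R : Type*} [CommRing R] [LinearOrder R] [IsStrictOrderedRing R] {t : R}

lemma geom_sum_le_geom_sum (ht : 0 ≤ t) {m n : ℕ} (hmn : m ≤ n) :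
    ∑ i ∈ range m, t ^ i ≤ ∑ i ∈ range n, t ^ i :=
  sum_le_sum_of_subset_of_nonneg (range_mono hmn) fun _ _ _ ↦ by positivity

lemma geom_sum_mul_le (ht : 0 ≤ t) (ht1 : t ≤ 1) (c m : ℕ) :
    ∑ i ∈ range (c * m), t ^ i ≤ c * ∑ i ∈ range m, t ^ i := by
  induction c with
  | zero => simp
  | succ c ih =>
    have tail : ∑ i ∈ range m, t ^ (c * m + i) ≤ ∑ i ∈ range m, t ^ i :=
      sum_le_sum fun i _ ↦ pow_le_pow_of_le_one ht ht1 (Nat.le_add_left i _)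
    rw [Nat.succ_mul, sum_range_add, Nat.cast_succ, add_one_mul]
    exact add_le_add ih tail

lemma geom_sum_le_two_mul_geom_sum_sq (ht : 0 ≤ t) (ht1 : t ≤ 1) (m : ℕ) :
    ∑ i ∈ range m, t ^ i ≤ 2 * ∑ i ∈ range m, (t ^ 2) ^ i :=
  calc ∑ i ∈ range m, t ^ i
      ≤ ∑ i ∈ range (2 * m), t ^ i := geom_sum_le_geom_sum ht (by lia)
    _ = (1 + t) * ∑ i ∈ range m, (t ^ 2) ^ i := geom_sum_two_mul t m
    _ ≤ 2 * ∑ i ∈ range m, (t ^ 2) ^ i := by gcongr; linarith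

lemma sum_partialSum_mul_pow_le (ht : 0 ≤ t) {b : ℕ → R} (hb : ∀ j, 0 ≤ b j) (N : ℕ) :
    ∑ s ∈ range N, (∑ j ∈ range (s + 1), b j) * t ^ s
      ≤ (∑ j ∈ range N, b j * t ^ j) * ∑ i ∈ range N, t ^ i := by
  rw [sum_partialSum_mul_pow, sum_mul]
  refine sum_le_sum fun j _ ↦ mul_le_mul_of_nonneg_left ?_ (mul_nonneg (hb j) (pow_nonneg ht j))
  exact geom_sum_le_geom_sum ht (Nat.sub_le N j)

lemma le_sum_partialSum_mul_pow (ht : 0 ≤ t) {b : ℕ → R} (hb : ∀ j, 0 ≤ b j) (n k : ℕ) :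
    (∑ j ∈ range n, b j * t ^ j) * ∑ i ∈ range (k + 1), t ^ i
      ≤ ∑ s ∈ range (n + k), (∑ j ∈ range (s + 1), b j) * t ^ s := by
  have coeff_nonneg (j : ℕ) : 0 ≤ b j * t ^ j := mul_nonneg (hb j) (pow_nonneg ht j)
  rw [sum_partialSum_mul_pow, sum_mul]
  calc ∑ j ∈ range n, b j * t ^ j * ∑ i ∈ range (k + 1), t ^ i
      ≤ ∑ j ∈ range n, b j * t ^ j * ∑ i ∈ range (n + k - j), t ^ i :=
        sum_le_sum fun j hj ↦ mul_le_mul_of_nonneg_left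
          (geom_sum_le_geom_sum ht (by have := mem_range.1 hj; lia)) (coeff_nonneg j)
    _ ≤ ∑ j ∈ range (n + k), b j * t ^ j * ∑ i ∈ range (n + k - j), t ^ i :=
        sum_le_sum_of_subset_of_nonneg (range_mono (Nat.le_add_right n k)) fun j _ _ ↦
          mul_nonneg (coeff_nonneg j) (sum_nonneg fun i _ ↦ pow_nonneg ht i)

lemma sum_choose_mul_pow_le_geom_sum_pow (ht : 0 ≤ t) (r N : ℕ) :
    ∑ s ∈ range N, ((s + r).choose r : R) * t ^ s ≤ (∑ i ∈ range N, t ^ i) ^ (r + 1) := by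
  induction r with
  | zero => simp
  | succ r ih =>
    calc ∑ s ∈ range N, ((s + (r + 1)).choose (r + 1) : R) * t ^ s
        = ∑ s ∈ range N, (∑ j ∈ range (s + 1), ((j + r).choose r : R)) * t ^ s := by
          simp only [← Nat.cast_sum, Nat.sum_range_add_choose, add_assoc]
      _ ≤ (∑ s ∈ range N, ((s + r).choose r : R) * t ^ s) * ∑ i ∈ range N, t ^ i :=
          sum_partialSum_mul_pow_le ht (fun _ ↦ Nat.cast_nonneg _) N
      _ ≤ (∑ i ∈ range N, t ^ i) ^ (r + 1 + 1) := by
          rw [pow_succ _ (r + 1)]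
          gcongr

lemma geom_sum_pow_le_sum_choose_mul_pow (ht : 0 ≤ t) (r k : ℕ) :
    (∑ i ∈ range (k + 1), t ^ i) ^ (r + 1)
      ≤ ∑ s ∈ range ((r + 1) * k + 1), ((s + r).choose r : R) * t ^ s := by
  induction r with
  | zero => simp
  | succ r ih =>
    calc (∑ i ∈ range (k + 1), t ^ i) ^ (r + 1 + 1)
        ≤ (∑ s ∈ range ((r + 1) * k + 1), ((s + r).choose r : R) * t ^ s)
            * ∑ i ∈ range (k + 1), t ^ i := by
          rw [pow_succ _ (r + 1)]
          gcongr
      _ ≤ ∑ s ∈ range ((r + 1) * k + 1 + k),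
            (∑ j ∈ range (s + 1), ((j + r).choose r : R)) * t ^ s :=
          le_sum_partialSum_mul_pow ht (fun _ ↦ Nat.cast_nonneg _) _ k
      _ = ∑ s ∈ range ((r + 1 + 1) * k + 1), ((s + (r + 1)).choose (r + 1) : R) * t ^ s := by
          simp only [← Nat.cast_sum, Nat.sum_range_add_choose, add_assoc]
          congr 2
          ring

lemma sum_sq_mul_pow_le (ht : 0 ≤ t) (N : ℕ) :
    ∑ ν ∈ range N, (ν : R) ^ 2 * t ^ ν ≤ 2 * t * (∑ ν ∈ range N, t ^ ν) ^ 3 := by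
  obtain _ | n := N
  · simp
  have coeff_le (s : ℕ) : ((s : R) + 1) ^ 2 ≤ 2 * ((s + 2).choose 2 : R) := by
    have := two_mul_choose_add_two_two s
    exact_mod_cast (by nlinarith : (s + 1) ^ 2 ≤ 2 * (s + 2).choose 2)
  calc ∑ ν ∈ range (n + 1), (ν : R) ^ 2 * t ^ ν
      = t * ∑ s ∈ range n, ((s : R) + 1) ^ 2 * t ^ s := sum_range_sq_mul_pow_succ t n
    _ ≤ t * ∑ s ∈ range n, 2 * ((s + 2).choose 2 : R) * t ^ s := by gcongr; exact coeff_le _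
    _ = 2 * t * ∑ s ∈ range n, ((s + 2).choose 2 : R) * t ^ s := by
        simp only [mul_assoc, ← mul_sum, mul_left_comm t]
    _ ≤ 2 * t * (∑ ν ∈ range n, t ^ ν) ^ 3 := by
        gcongr; exact sum_choose_mul_pow_le_geom_sum_pow ht 2 n
    _ ≤ 2 * t * (∑ ν ∈ range (n + 1), t ^ ν) ^ 3 := by
        gcongr; exact n.le_succ

lemma mul_geom_sum_pow_three_le_sum_sq_mul_pow (ht : 0 ≤ t) (k : ℕ) :
    t * (∑ i ∈ range (k + 1), t ^ i) ^ 3 ≤ ∑ ν ∈ range (3 * k + 2), (ν : R) ^ 2 * t ^ ν := by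
  have le_coeff (s : ℕ) : ((s + 2).choose 2 : R) ≤ ((s : R) + 1) ^ 2 := by
    have := two_mul_choose_add_two_two s
    exact_mod_cast (by nlinarith : (s + 2).choose 2 ≤ (s + 1) ^ 2)
  calc t * (∑ i ∈ range (k + 1), t ^ i) ^ 3
      ≤ t * ∑ s ∈ range (3 * k + 1), ((s + 2).choose 2 : R) * t ^ s := by
        gcongr; exact geom_sum_pow_le_sum_choose_mul_pow ht 2 k
    _ ≤ t * ∑ s ∈ range (3 * k + 1), ((s : R) + 1) ^ 2 * t ^ s := by gcongr; exact le_coeff _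
    _ = ∑ ν ∈ range (3 * k + 2), (ν : R) ^ 2 * t ^ ν := (sum_range_sq_mul_pow_succ t _).symm

lemma geomDispersion_le (ht : 0 ≤ t) (N : ℕ) :
    geomDispersion t N ≤ 2 * t * (∑ ν ∈ range N, t ^ ν) ^ 4 :=
  calc geomDispersion t N
      ≤ (∑ ν ∈ range N, t ^ ν) * ∑ ν ∈ range N, (ν : R) ^ 2 * t ^ ν :=
        sub_le_self _ (sq_nonneg _)
    _ ≤ (∑ ν ∈ range N, t ^ ν) * (2 * t * (∑ ν ∈ range N, t ^ ν) ^ 3) := by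
        gcongr; exact sum_sq_mul_pow_le ht N
    _ = 2 * t * (∑ ν ∈ range N, t ^ ν) ^ 4 := by ring

lemma geom_sum_sq_mul_sum_sq_le_geomDispersion (ht : 0 ≤ t) (m n : ℕ) :
    (∑ μ ∈ range m, (t ^ 2) ^ μ) * ∑ ν ∈ range (n + 1), (ν : R) ^ 2 * t ^ ν
      ≤ geomDispersion t (n + m) := by
  rw [geomDispersion_eq_sum, sum_mul]
  calc ∑ μ ∈ range m, (t ^ 2) ^ μ * ∑ ν ∈ range (n + 1), (ν : R) ^ 2 * t ^ ν
      ≤ ∑ μ ∈ range m, (t ^ 2) ^ μ * ∑ ν ∈ range (n + m - μ), (ν : R) ^ 2 * t ^ ν := by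
        refine sum_le_sum fun μ hμ ↦ mul_le_mul_of_nonneg_left ?_ (by positivity)
        refine sum_le_sum_of_subset_of_nonneg (range_mono ?_) fun _ _ _ ↦ by positivity
        have := mem_range.1 hμ
        lia
    _ ≤ ∑ μ ∈ range (n + m), (t ^ 2) ^ μ * ∑ ν ∈ range (n + m - μ), (ν : R) ^ 2 * t ^ ν :=
        sum_le_sum_of_subset_of_nonneg (range_mono (Nat.le_add_left m n)) fun _ _ _ ↦ by positivity

lemma le_geomDispersion (ht : 0 ≤ t) (ht1 : t ≤ 1) {N : ℕ} (hN : 2 ≤ N) :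
    t * (∑ ν ∈ range N, t ^ ν) ^ 4 ≤ 1250 * geomDispersion t N := by
  obtain ⟨k, hkN, hNk⟩ : ∃ k, 4 * k + 2 ≤ N ∧ N ≤ 5 * (k + 1) := ⟨(N - 2) / 4, by lia, by lia⟩
  obtain ⟨n, rfl⟩ : ∃ n, N = n + (k + 1) := Nat.exists_eq_add_of_le' (by lia)
  set K := ∑ i ∈ range (k + 1), t ^ i
  have geom_sum_le : ∑ ν ∈ range (n + (k + 1)), t ^ ν ≤ 5 * K :=
    (geom_sum_le_geom_sum ht hNk).trans (mod_cast geom_sum_mul_le ht ht1 5 (k + 1))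
  have le_sum_sq : t * K ^ 3 ≤ ∑ ν ∈ range (n + 1), (ν : R) ^ 2 * t ^ ν :=
    (mul_geom_sum_pow_three_le_sum_sq_mul_pow ht k).trans <|
      sum_le_sum_of_subset_of_nonneg (range_mono (by lia)) fun _ _ _ ↦ by positivity
  calc t * (∑ ν ∈ range (n + (k + 1)), t ^ ν) ^ 4
      ≤ t * (5 * K) ^ 4 := by gcongr
    _ = 625 * (K * (t * K ^ 3)) := by ring
    _ ≤ 625 * ((2 * ∑ μ ∈ range (k + 1), (t ^ 2) ^ μ)
          * ∑ ν ∈ range (n + 1), (ν : R) ^ 2 * t ^ ν) := by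
        gcongr; exact geom_sum_le_two_mul_geom_sum_sq ht ht1 _
    _ = 1250 * ((∑ μ ∈ range (k + 1), (t ^ 2) ^ μ)
          * ∑ ν ∈ range (n + 1), (ν : R) ^ 2 * t ^ ν) := by ring
    _ ≤ 1250 * geomDispersion t (n + (k + 1)) := by
        gcongr; exact geom_sum_sq_mul_sum_sq_le_geomDispersion ht _ n

end Order

theorem K_tD_comparison_general {F : Type*} [Field F] [LinearOrder F] [IsStrictOrderedRing F]
    {N : ℕ} (hN : 2 ≤ N) {t : F} (ht : 0 < t) (ht1 : t ≤ 1) :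
    (1 / 625) * (∑ ν ∈ range N, t ^ ν) ^ 4
        ≤ (2 / t) * ((∑ ν ∈ range N, t ^ ν) * (∑ ν ∈ range N, (ν : F) ^ 2 * t ^ ν)
            - (∑ ν ∈ range N, (ν : F) * t ^ ν) ^ 2) ∧
    (2 / t) * ((∑ ν ∈ range N, t ^ ν) * (∑ ν ∈ range N, (ν : F) ^ 2 * t ^ ν)
            - (∑ ν ∈ range N, (ν : F) * t ^ ν) ^ 2)
        ≤ 4 * (∑ ν ∈ range N, t ^ ν) ^ 4 := by
  have lower := le_geomDispersion ht.le ht1 hN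
  have upper := geomDispersion_le ht.le N
  rw [← geomDispersion, div_mul_eq_mul_div 2 t, le_div_iff₀ ht, div_le_iff₀ ht]
  constructor <;> linarith

/-- There is a universal `C ≥ 1` such that for all `N ≥ 2` and `0 < t ≤ 1 − 1/N`,
with `K(t) = Σ_{ν=0}^{N−1} t^ν`:
`(1/C) K⁴ ≤ (2/t)(K·(tD)²K − ((tD)K)²) ≤ C K⁴`. -/
theorem K_tD_comparison :
    ∃ C ≥ (1:ℝ), ∀ N : ℕ, 2 ≤ N → ∀ t : ℝ, 0 < t → t ≤ 1 - 1 / (N : ℝ) →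
      (1 / C) * (∑ ν ∈ range N, t ^ ν) ^ 4
          ≤ (2 / t) * ((∑ ν ∈ range N, t ^ ν) * (∑ ν ∈ range N, (ν : ℝ) ^ 2 * t ^ ν)
              - (∑ ν ∈ range N, (ν : ℝ) * t ^ ν) ^ 2) ∧
      (2 / t) * ((∑ ν ∈ range N, t ^ ν) * (∑ ν ∈ range N, (ν : ℝ) ^ 2 * t ^ ν)
              - (∑ ν ∈ range N, (ν : ℝ) * t ^ ν) ^ 2)
          ≤ C * (∑ ν ∈ range N, t ^ ν) ^ 4 := by
  refine ⟨625, by norm_num, fun N hN t ht htN ↦ ?_⟩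
  have ht1 : t ≤ 1 := htN.trans (sub_le_self 1 (by positivity))
  exact (K_tD_comparison_general hN ht ht1).imp_right fun h ↦ h.trans (by gcongr; norm_num)
end
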